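/- arXiv:2007.05384 — 3 statements merged into one kernel-verified Lean document; each statement's English description precedes it below -/
import Mathlib

section
/- Let δ ∈ (0, 2^{−1/3}). For x ∈ [0,2] define s_0 := x + δ², c_0 := x + δ² − 1, and recursively s_{n+1} := s_n − (s_n c_n)/2, c_{n+1} := c_n² (c_n − 3)/4. Then for every natural number n satisfying n ≥ ( log( log(1/2) + 3 log(δ^{−1}) ) + 2 log(δ^{−1}) ) / log 2, one has sup_{x∈[0,2]} | √x − s_n | ≤ 2δ. -/
/-!
Put `y = x + δ²`. The recursion preserves `s n ^ 2 = y * (1 + c n)`, and `c` is squared, up to a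
factor in `[-1, 0]`, at each step once it lies in `[-1, 0]`; hence `s n` increases to `√y`, with
relative error at most `(1 - δ²) ^ 2 ^ n` when `y ≤ 1`. The threshold on `n` says exactly that
`exp (-(δ² 2ⁿ)) ≤ 2 δ³`, while `√y ≤ √x + δ` bounds the effect of the shift.

When `1 ≤ y` the residual enters `[-1, 0]` only after one step, which costs a square root in the
decay. For `δ ≤ 1 / 2` the bound `y * δ ≤ 2` absorbs this loss. For `1 / 2 ≤ δ` the tolerance `2 δ`
is at least `1`, and both `s 0` and the lower bound `s 1` for all later iterates already meet it.
-/

open Real Set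

/-- The Newton-type iteration for `√y`: `s n` is the approximation, and `c n` the relative residual
`s n ^ 2 / y - 1`, carried along by its own recursion so that no division occurs. -/
structure IsSqrtIteration (y : ℝ) (s c : ℕ → ℝ) : Prop where
  approx_zero : s 0 = y
  residual_zero : c 0 = y - 1
  approx_succ (n : ℕ) : s (n + 1) = s n - s n * c n / 2
  residual_succ (n : ℕ) : c (n + 1) = c n ^ 2 * (c n - 3) / 4

namespace IsSqrtIteration

variable {y : ℝ} {s c : ℕ → ℝ}

lemma approx_sq (h : IsSqrtIteration y s c) (n : ℕ) : s n ^ 2 = y * (1 + c n) := by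
  induction n with
  | zero => rw [h.approx_zero, h.residual_zero]; ring
  | succ n ih =>
    rw [h.approx_succ, h.residual_succ]
    linear_combination (1 - c n / 2) ^ 2 * ih

lemma approx_one (h : IsSqrtIteration y s c) : s 1 = y * (3 - y) / 2 := by
  rw [h.approx_succ, h.approx_zero, h.residual_zero]
  ring

lemma one_add_residual_one (h : IsSqrtIteration y s c) : 1 + c 1 = y * (3 - y) ^ 2 / 4 := by
  rw [h.residual_succ, h.residual_zero]
  ring

lemma residual_one_nonpos (h : IsSqrtIteration y s c) (hy : y ≤ 4) : c 1 ≤ 0 := by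
  have h_factor : (y - 1) ^ 2 * (y - 4) ≤ 0 :=
    mul_nonpos_of_nonneg_of_nonpos (sq_nonneg _) (by linarith)
  rw [h.residual_succ, h.residual_zero]
  linarith

lemma residual_add_mem_Icc (h : IsSqrtIteration y s c) {a : ℝ} {k : ℕ} (ha : a ≤ 1)
    (hk : c k ∈ Icc (-a) 0) (n : ℕ) : c (k + n) ∈ Icc (-a ^ 2 ^ n) 0 := by
  induction n with
  | zero => simpa using hk
  | succ n ih =>
    obtain ⟨h_lower, h_nonpos⟩ := ih
    have h_pow_le_one : a ^ 2 ^ n ≤ 1 := pow_le_one₀ (by linarith [hk.1, hk.2]) ha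
    have h_neg_one_le : -1 ≤ c (k + n) := by linarith
    have h_sq : c (k + n) ^ 2 ≤ (a ^ 2 ^ n) ^ 2 :=
      sq_le_sq' h_lower (h_nonpos.trans (by linarith))
    rw [← add_assoc, h.residual_succ, pow_succ, pow_mul]
    constructor
    · linarith [mul_nonneg (sq_nonneg (c (k + n))) (neg_le_iff_add_nonneg.1 h_neg_one_le)]
    · linarith [mul_nonneg (sq_nonneg (c (k + n))) (neg_nonneg.2 h_nonpos), sq_nonneg (c (k + n))]

lemma residual_succ_mem_Icc (h : IsSqrtIteration y s c) (hy : y ∈ Icc 0 4) (n : ℕ) :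
    c (n + 1) ∈ Icc (-1) 0 := by
  have h_one : -1 ≤ c 1 := by
    have : 0 ≤ y * (3 - y) ^ 2 := mul_nonneg hy.1 (sq_nonneg _)
    linarith [h.one_add_residual_one]
  simpa [add_comm] using
    h.residual_add_mem_Icc le_rfl ⟨h_one, h.residual_one_nonpos hy.2⟩ n

lemma residual_le_two (h : IsSqrtIteration y s c) (hy : y ∈ Icc 0 3) (n : ℕ) : c n ≤ 2 := by
  cases n with
  | zero => rw [h.residual_zero]; linarith [hy.2]
  | succ n => linarith [(h.residual_succ_mem_Icc ⟨hy.1, by linarith [hy.2]⟩ n).2]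

lemma approx_nonneg (h : IsSqrtIteration y s c) (hy : y ∈ Icc 0 3) (n : ℕ) : 0 ≤ s n := by
  induction n with
  | zero => rw [h.approx_zero]; exact hy.1
  | succ n ih =>
    rw [h.approx_succ]
    linarith [mul_le_mul_of_nonneg_left (h.residual_le_two hy n) ih]

lemma approx_le_sqrt (h : IsSqrtIteration y s c) (hy : 0 ≤ y) {n : ℕ} (hc : c n ≤ 0) :
    s n ≤ √y := by
  refine le_sqrt_of_sq_le ?_
  rw [h.approx_sq]
  exact mul_le_of_le_one_right hy (by linarith)

lemma approx_one_le_approx_succ (h : IsSqrtIteration y s c) (hy : y ∈ Icc 0 3) (n : ℕ) :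
    s 1 ≤ s (n + 1) := by
  refine monotone_nat_of_le_succ (f := fun n ↦ s (n + 1)) (fun n ↦ ?_) n.zero_le
  have h_residual := (h.residual_succ_mem_Icc ⟨hy.1, by linarith [hy.2]⟩ n).2
  have h_step := mul_nonpos_of_nonneg_of_nonpos (h.approx_nonneg hy (n + 1)) h_residual
  rw [h.approx_succ (n + 1)]
  linarith

lemma sqrt_mul_one_add_residual_le (h : IsSqrtIteration y s c) (hy : y ∈ Icc 0 3) {n : ℕ}
    (hc : c n ∈ Icc (-1) 0) : √y * (1 + c n) ≤ s n := by
  refine le_of_sq_le_sq ?_ (h.approx_nonneg hy n)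
  rw [mul_pow, sq_sqrt hy.1, h.approx_sq]
  gcongr
  · exact hy.1
  · linarith [mul_nonpos_of_nonneg_of_nonpos (neg_le_iff_add_nonneg'.1 hc.1) hc.2]

lemma sqrt_sub_approx_le (h : IsSqrtIteration y s c) (hy : y ∈ Icc 0 3) {a : ℝ} {k : ℕ}
    (ha : 0 ≤ a) (hk : c k ∈ Icc (-(1 - a)) 0) (n : ℕ) :
    √y - s (k + n) ≤ √y * exp (-(a * 2 ^ n)) := by
  have h_base : 0 ≤ 1 - a := by linarith [hk.1, hk.2]
  have hc := h.residual_add_mem_Icc (by linarith) hk n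
  have h_pow_le_one : (1 - a) ^ 2 ^ n ≤ 1 := pow_le_one₀ h_base (by linarith)
  have h_pow_le_exp : (1 - a) ^ 2 ^ n ≤ exp (-(a * 2 ^ n)) :=
    calc (1 - a) ^ 2 ^ n ≤ exp (-a) ^ 2 ^ n := by
          gcongr
          exact one_sub_le_exp_neg a
      _ = exp (-(a * 2 ^ n)) := by rw [← exp_nat_mul]; push_cast; ring_nf
  calc √y - s (k + n) ≤ √y * -c (k + n) := by
        linarith [h.sqrt_mul_one_add_residual_le hy ⟨by linarith [hc.1], hc.2⟩]
    _ ≤ √y * exp (-(a * 2 ^ n)) := by gcongr; linarith [hc.1]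

lemma one_fourth_le_one_add_residual_one (h : IsSqrtIteration y s c) (hy : y ∈ Icc 1 (9 / 4)) :
    1 / 4 ≤ 1 + c 1 := by
  have h_product : 27 / 16 ≤ y * (3 - y) := by
    linarith [mul_nonneg (sub_nonneg.2 hy.1) (sub_nonneg.2 hy.2), hy.2]
  calc (1 / 4 : ℝ) ≤ 27 / 16 * (3 / 4) / 4 := by norm_num
    _ ≤ y * (3 - y) * (3 - y) / 4 := by gcongr; linarith [hy.2]
    _ = 1 + c 1 := by rw [h.one_add_residual_one]; ring

lemma sqrt_two_le_one_add_approx_one (h : IsSqrtIteration y s c) (hy : y ∈ Icc 1 (66 / 25)) :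
    √2 ≤ 1 + s 1 := by
  have h_sqrt_two : √2 ≤ 1.42 := sqrt_le_iff.2 (by norm_num)
  rw [h.approx_one]
  linarith [mul_nonneg (sub_nonneg.2 hy.1) (sub_nonneg.2 hy.2), hy.2]

end IsSqrtIteration

lemma exp_neg_sq_mul_two_pow_le {δ : ℝ} (hδ : 0 < δ) (hδ_cube : δ ^ 3 < 1 / 2) {n : ℕ}
    (hn : (log (log (1 / 2) + 3 * log δ⁻¹) + 2 * log δ⁻¹) / log 2 ≤ n) :
    exp (-(δ ^ 2 * 2 ^ n)) ≤ 2 * δ ^ 3 := by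
  have h_log_cube : log (1 / 2) + 3 * log δ⁻¹ = -log (2 * δ ^ 3) := by
    rw [log_mul two_ne_zero (by positivity), log_pow, log_inv, one_div, log_inv]
    push_cast
    ring
  have h_log_pos : 0 < -log (2 * δ ^ 3) := neg_pos.2 (log_neg (by positivity) (by linarith))
  have h_log_product : log (δ ^ 2 * 2 ^ n) = n * log 2 - 2 * log δ⁻¹ := by
    rw [log_mul (by positivity) (by positivity), log_pow, log_pow, log_inv]
    push_cast
    ring
  rw [h_log_cube, div_le_iff₀ (log_pos one_lt_two)] at hn
  have h_threshold : -log (2 * δ ^ 3) ≤ δ ^ 2 * 2 ^ n :=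
    (log_le_log_iff h_log_pos (by positivity)).1 (by linarith)
  rw [← le_log_iff_exp_le (by positivity)]
  linarith

lemma sqrt_add_sq_le_sqrt_add {x δ : ℝ} (hx : 0 ≤ x) (hδ : 0 ≤ δ) : √(x + δ ^ 2) ≤ √x + δ := by
  refine sqrt_le_iff.2 ⟨by positivity, ?_⟩
  rw [add_sq, sq_sqrt hx]
  linarith [mul_nonneg (sqrt_nonneg x) hδ]

lemma abs_sqrt_sub_add_sq_le {x δ : ℝ} (hx : x ∈ Icc 0 2) (hδ : δ ∈ Icc (1 / 2) 1) :
    |√x - (x + δ ^ 2)| ≤ 2 * δ := by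
  have h_sq : √x ^ 2 = x := sq_sqrt hx.1
  have hδ_product : 0 ≤ (δ - 1 / 2) * (1 - δ) :=
    mul_nonneg (sub_nonneg.2 hδ.1) (sub_nonneg.2 hδ.2)
  have h_sqrt_le : √x ≤ 3 / 2 := sqrt_le_iff.2 ⟨by norm_num, by linarith [hx.2]⟩
  have h_product : 0 ≤ √x * (3 / 2 - √x) := mul_nonneg (sqrt_nonneg x) (sub_nonneg.2 h_sqrt_le)
  rw [abs_le]
  constructor
  · linarith [hδ.1, hx.2]
  · linarith [sq_nonneg (√x - 1 / 2), sq_nonneg δ, hδ.1]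

lemma abs_sqrt_sub_le_of_sqrt_add_sq_sub_le {x δ r : ℝ} (hx : 0 ≤ x) (hδ : 0 ≤ δ)
    (h_le : r ≤ √(x + δ ^ 2)) (h_sub_le : √(x + δ ^ 2) - r ≤ 2 * δ) : |√x - r| ≤ 2 * δ := by
  have h_mono : √x ≤ √(x + δ ^ 2) := sqrt_le_sqrt (by linarith [sq_nonneg δ])
  rw [abs_le]
  constructor <;> linarith [sqrt_add_sq_le_sqrt_add hx hδ]

namespace IsSqrtIteration

variable {x δ : ℝ} {s c : ℕ → ℝ}

lemma abs_sqrt_sub_approx_le_of_le_one (h : IsSqrtIteration (x + δ ^ 2) s c) (hx : 0 ≤ x)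
    (hδ : 0 ≤ δ) (hy : x + δ ^ 2 ≤ 1) {n : ℕ} (hn : exp (-(δ ^ 2 * 2 ^ n)) ≤ 2 * δ ^ 3) :
    |√x - s n| ≤ 2 * δ := by
  have hy_nonneg : 0 ≤ x + δ ^ 2 := by positivity
  have hδ_sq : δ ^ 2 ≤ 1 := by linarith
  have hc_zero : c 0 ∈ Icc (-(1 - δ ^ 2)) 0 := by
    rw [h.residual_zero]
    constructor <;> linarith
  have hc_nonpos : c n ≤ 0 := by
    simpa using (h.residual_add_mem_Icc (by linarith [sq_nonneg δ]) hc_zero n).2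
  refine abs_sqrt_sub_le_of_sqrt_add_sq_sub_le hx hδ (h.approx_le_sqrt hy_nonneg hc_nonpos) ?_
  calc √(x + δ ^ 2) - s n ≤ √(x + δ ^ 2) * exp (-(δ ^ 2 * 2 ^ n)) := by
        simpa using h.sqrt_sub_approx_le ⟨hy_nonneg, by linarith⟩ (sq_nonneg δ) hc_zero n
    _ ≤ 1 * (2 * δ ^ 3) := by
        gcongr
        exact sqrt_le_one.2 hy
    _ = 2 * δ * δ ^ 2 := by ring
    _ ≤ 2 * δ := mul_le_of_le_one_right (by positivity) hδ_sq

lemma abs_sqrt_sub_approx_succ_le_of_le_half (h : IsSqrtIteration (x + δ ^ 2) s c)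
    (hx : x ∈ Icc 0 2) (hδ : δ ∈ Icc 0 (1 / 2)) (hy : 1 ≤ x + δ ^ 2) {n : ℕ}
    (hn : exp (-(δ ^ 2 * 2 ^ (n + 1))) ≤ 2 * δ ^ 3) : |√x - s (n + 1)| ≤ 2 * δ := by
  have hδ_sq : δ ^ 2 ≤ (1 / 2) ^ 2 := pow_le_pow_left₀ hδ.1 hδ.2 2
  have hy_mem : x + δ ^ 2 ∈ Icc 0 3 := ⟨by linarith, by linarith [hx.2]⟩
  have hc_one : c 1 ∈ Icc (-(1 - δ ^ 2)) 0 :=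
    ⟨by linarith [h.one_fourth_le_one_add_residual_one ⟨hy, by linarith [hx.2]⟩],
      h.residual_one_nonpos (by linarith [hy_mem.2])⟩
  have hc_nonpos : c (n + 1) ≤ 0 :=
    (h.residual_succ_mem_Icc ⟨hy_mem.1, by linarith [hy_mem.2]⟩ n).2
  refine abs_sqrt_sub_le_of_sqrt_add_sq_sub_le hx.1 hδ.1 (h.approx_le_sqrt hy_mem.1 hc_nonpos) ?_
  have h_exp_sq : exp (-(δ ^ 2 * 2 ^ n)) ^ 2 = exp (-(δ ^ 2 * 2 ^ (n + 1))) := by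
    rw [← exp_nat_mul]
    push_cast
    ring_nf
  calc √(x + δ ^ 2) - s (n + 1) ≤ √(x + δ ^ 2) * exp (-(δ ^ 2 * 2 ^ n)) := by
        simpa only [add_comm 1 n] using h.sqrt_sub_approx_le hy_mem (sq_nonneg δ) hc_one n
    _ ≤ 2 * δ := by
        refine le_of_sq_le_sq ?_ (by linarith [hδ.1])
        rw [mul_pow, sq_sqrt hy_mem.1, h_exp_sq]
        calc (x + δ ^ 2) * exp (-(δ ^ 2 * 2 ^ (n + 1))) ≤ 3 * (2 * δ ^ 3) := by
              gcongr
              exact hy_mem.2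
          _ = 6 * δ * δ ^ 2 := by ring
          _ ≤ 4 * δ ^ 2 := by gcongr; linarith [hδ.2]
          _ = (2 * δ) ^ 2 := by ring

lemma abs_sqrt_sub_approx_le_of_half_le (h : IsSqrtIteration (x + δ ^ 2) s c)
    (hx : x ∈ Icc 0 2) (hδ : δ ∈ Icc (1 / 2) (4 / 5)) (hy : 1 ≤ x + δ ^ 2) (n : ℕ) :
    |√x - s n| ≤ 2 * δ := by
  have hδ_nonneg : 0 ≤ δ := by linarith [hδ.1]
  have hδ_sq : δ ^ 2 ≤ (4 / 5) ^ 2 := pow_le_pow_left₀ hδ_nonneg hδ.2 2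
  have hy_le : x + δ ^ 2 ≤ 66 / 25 := by linarith [hx.2]
  cases n with
  | zero =>
    rw [h.approx_zero]
    exact abs_sqrt_sub_add_sq_le hx ⟨hδ.1, by linarith [hδ.2]⟩
  | succ n =>
    have h_upper : s (n + 1) ≤ √(x + δ ^ 2) :=
      h.approx_le_sqrt (by linarith) (h.residual_succ_mem_Icc ⟨by linarith, by linarith⟩ n).2
    have h_lower : √x ≤ 1 + s (n + 1) :=
      calc √x ≤ √2 := sqrt_le_sqrt hx.2
        _ ≤ 1 + s 1 := h.sqrt_two_le_one_add_approx_one ⟨hy, hy_le⟩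
        _ ≤ 1 + s (n + 1) := by
          gcongr
          exact h.approx_one_le_approx_succ ⟨by linarith, by linarith⟩ n
    rw [abs_le]
    constructor <;> linarith [sqrt_add_sq_le_sqrt_add hx.1 hδ_nonneg, hδ.1]

lemma abs_sqrt_sub_approx_le_of_le_half (h : IsSqrtIteration (x + δ ^ 2) s c)
    (hx : x ∈ Icc 0 2) (hδ : δ ∈ Icc 0 (1 / 2)) (hy : 1 ≤ x + δ ^ 2) {n : ℕ}
    (hn : exp (-(δ ^ 2 * 2 ^ n)) ≤ 2 * δ ^ 3) : |√x - s n| ≤ 2 * δ := by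
  cases n with
  | zero =>
    have hδ_sq : δ ^ 2 ≤ (1 / 2) ^ 2 := pow_le_pow_left₀ hδ.1 hδ.2 2
    have hδ_cube : δ ^ 3 ≤ (1 / 2) ^ 3 := pow_le_pow_left₀ hδ.1 hδ.2 3
    have h_not_threshold : 2 * δ ^ 3 < exp (-δ ^ 2) := by linarith [one_sub_le_exp_neg (δ ^ 2)]
    rw [pow_zero, mul_one] at hn
    exact absurd hn h_not_threshold.not_ge
  | succ n => exact h.abs_sqrt_sub_approx_succ_le_of_le_half hx hδ hy hn

lemma abs_sqrt_sub_approx_le (h : IsSqrtIteration (x + δ ^ 2) s c) (hx : x ∈ Icc 0 2)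
    (hδ : δ ∈ Icc 0 (4 / 5)) {n : ℕ} (hn : exp (-(δ ^ 2 * 2 ^ n)) ≤ 2 * δ ^ 3) :
    |√x - s n| ≤ 2 * δ := by
  rcases le_total (x + δ ^ 2) 1 with hy | hy
  · exact h.abs_sqrt_sub_approx_le_of_le_one hx.1 hδ.1 hy hn
  rcases le_total δ (1 / 2) with hδ_half | hδ_half
  · exact h.abs_sqrt_sub_approx_le_of_le_half hx ⟨hδ.1, hδ_half⟩ hy hn
  · exact h.abs_sqrt_sub_approx_le_of_half_le hx ⟨hδ_half, hδ.2⟩ hy n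

end IsSqrtIteration

/-- Let `δ ∈ (0, 2^{−1/3})`. For `x ∈ [0,2]` run the square-root iteration with shifted
initial data `s_0 = x + δ²`, `c_0 = x + δ² − 1`. Then for every `n` with
`n ≥ (log(log(1/2) + 3 log δ⁻¹) + 2 log δ⁻¹)/log 2`, one has
`sup_{x∈[0,2]} |√x − s_n| ≤ 2δ`. -/
theorem sqrt_iteration_shifted_uniform (δ : ℝ)
    (hδ : δ ∈ Set.Ioo (0 : ℝ) ((2 : ℝ) ^ (-(1 / 3 : ℝ))))
    (s c : ℝ → ℕ → ℝ)
    (hs0 : ∀ x, s x 0 = x + δ ^ 2) (hc0 : ∀ x, c x 0 = x + δ ^ 2 - 1)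
    (hs : ∀ x n, s x (n + 1) = s x n - s x n * c x n / 2)
    (hc : ∀ x n, c x (n + 1) = (c x n) ^ 2 * (c x n - 3) / 4) :
    ∀ n : ℕ,
      (Real.log (Real.log (1 / 2) + 3 * Real.log δ⁻¹) + 2 * Real.log δ⁻¹) / Real.log 2
        ≤ (n : ℝ) →
      ∀ x ∈ Set.Icc (0 : ℝ) 2, |Real.sqrt x - s x n| ≤ 2 * δ := by
  intro n hn x hx
  obtain ⟨hδ_pos, hδ_lt⟩ := hδ
  have hδ_cube : δ ^ 3 < 1 / 2 := by
    calc δ ^ 3 < ((2 : ℝ) ^ (-(1 / 3 : ℝ))) ^ 3 := pow_lt_pow_left₀ hδ_lt hδ_pos.le three_ne_zero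
      _ = 1 / 2 := by rw [← rpow_mul_natCast zero_le_two]; norm_num
  have hδ_le : δ ≤ 4 / 5 := le_of_pow_le_pow_left₀ three_ne_zero (by norm_num) (by linarith)
  have h_iteration : IsSqrtIteration (x + δ ^ 2) (s x) (c x) := ⟨hs0 x, hc0 x, hs x, hc x⟩
  exact h_iteration.abs_sqrt_sub_approx_le hx ⟨hδ_pos.le, hδ_le⟩
    (exp_neg_sq_mul_two_pow_le hδ_pos hδ_cube hn)
end

section
/- For all real numbers a, b, c > 1, the integral ∫₀^∞ a^y c^{−b^y} dy is finite and satisfies ∫₀^∞ a^y c^{−b^y} dy ≤ k! / ( (log c)^{k+1} · log b ), where k := ⌈ log a / log b ⌉. -/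
open Real MeasureTheory

/-!
If `a ≤ b ^ p`, then `a ^ y ≤ (b ^ y) ^ p` for `0 ≤ y`, so the integrand is at most
`(b ^ y) ^ p * exp (-(log c * b ^ y))`. The latter is integrable over the whole line: under
`u = b ^ y`, `|dy| = du / (u * |log b|)`, its integral becomes `|log b|⁻¹` times the Gamma integral
of `u ^ (p - 1) * exp (-(log c * u))`, that is, `Γ(p) / ((log c) ^ p * |log b|)`. The factorial
bound is the case `p = k + 1`.
-/

section ChangeOfVariables

variable {b : ℝ}

theorem range_const_rpow (hb₀ : 0 < b) (hb₁ : b ≠ 1) :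
    Set.range (fun y : ℝ => b ^ y) = Set.Ioi 0 := by
  ext u
  refine ⟨?_, fun hu => ⟨logb b u, rpow_logb hb₀ hb₁ hu⟩⟩
  rintro ⟨y, rfl⟩
  exact rpow_pos_of_pos hb₀ y

theorem injective_const_rpow (hb₀ : 0 < b) (hb₁ : b ≠ 1) :
    Function.Injective (fun y : ℝ => b ^ y) :=
  fun _ _ => (rpow_right_inj hb₀ hb₁).1

theorem abs_rpow_mul_log_smul_inv_rpow_smul {E : Type*} [AddCommGroup E] [Module ℝ E]
    (hb : 0 < b) (y : ℝ) (v : E) :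
    |b ^ y * log b| • (b ^ y)⁻¹ • v = |log b| • v := by
  have hby : 0 < b ^ y := rpow_pos_of_pos hb y
  rw [abs_mul, abs_of_pos hby, smul_smul, mul_right_comm, mul_inv_cancel₀ hby.ne', one_mul]

variable {E : Type*} [NormedAddCommGroup E] [NormedSpace ℝ E]

theorem integrable_comp_const_rpow_iff (hb₀ : 0 < b) (hb₁ : b ≠ 1) (g : ℝ → E) :
    Integrable (fun y : ℝ => g (b ^ y)) ↔ IntegrableOn (fun u => u⁻¹ • g u) (Set.Ioi 0) := by
  have hlog : |log b| ≠ 0 := abs_ne_zero.2 (log_ne_zero_of_pos_of_ne_one hb₀ hb₁)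
  rw [← range_const_rpow hb₀ hb₁, ← Set.image_univ,
    integrableOn_image_iff_integrableOn_abs_deriv_smul MeasurableSet.univ
      (fun y _ => (hasStrictDerivAt_const_rpow hb₀ y).hasDerivAt.hasDerivWithinAt)
      (injective_const_rpow hb₀ hb₁).injOn, integrableOn_univ]
  simp only [abs_rpow_mul_log_smul_inv_rpow_smul hb₀]
  exact (integrable_fun_smul_iff hlog _).symm

theorem integral_comp_const_rpow (hb₀ : 0 < b) (hb₁ : b ≠ 1) (g : ℝ → E) :
    ∫ y : ℝ, g (b ^ y) = |log b|⁻¹ • ∫ u in Set.Ioi 0, u⁻¹ • g u := by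
  have hlog : |log b| ≠ 0 := abs_ne_zero.2 (log_ne_zero_of_pos_of_ne_one hb₀ hb₁)
  rw [← range_const_rpow hb₀ hb₁, ← Set.image_univ,
    integral_image_eq_integral_abs_deriv_smul MeasurableSet.univ
      (fun y _ => (hasStrictDerivAt_const_rpow hb₀ y).hasDerivAt.hasDerivWithinAt)
      (injective_const_rpow hb₀ hb₁).injOn, setIntegral_univ]
  simp only [abs_rpow_mul_log_smul_inv_rpow_smul hb₀]
  rw [integral_smul, inv_smul_smul₀ hlog]

end ChangeOfVariables

section GammaIntegral

variable {b p r : ℝ}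

theorem integrableOn_rpow_sub_one_mul_exp_neg_mul_Ioi (hp : 0 < p) (hr : 0 < r) :
    IntegrableOn (fun u => u ^ (p - 1) * exp (-(r * u))) (Set.Ioi 0) := by
  simpa only [rpow_one, neg_mul] using
    integrableOn_rpow_mul_exp_neg_mul_rpow (show -1 < p - 1 by linarith) one_pos hr

theorem inv_smul_rpow_mul_eqOn_Ioi (p : ℝ) (f : ℝ → ℝ) :
    Set.EqOn (fun u => u⁻¹ • (u ^ p * f u)) (fun u => u ^ (p - 1) * f u) (Set.Ioi 0) := by
  intro u (hu : 0 < u)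
  simp only [smul_eq_mul, rpow_sub_one hu.ne']
  ring

theorem integrable_const_rpow_rpow_mul_exp_neg_mul (hb₀ : 0 < b) (hb₁ : b ≠ 1) (hp : 0 < p)
    (hr : 0 < r) : Integrable fun y : ℝ => (b ^ y) ^ p * exp (-(r * b ^ y)) := by
  rw [integrable_comp_const_rpow_iff hb₀ hb₁ fun u => u ^ p * exp (-(r * u)),
    integrableOn_congr_fun (inv_smul_rpow_mul_eqOn_Ioi p _) measurableSet_Ioi]
  exact integrableOn_rpow_sub_one_mul_exp_neg_mul_Ioi hp hr

theorem integral_const_rpow_rpow_mul_exp_neg_mul (hb₀ : 0 < b) (hb₁ : b ≠ 1) (hp : 0 < p)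
    (hr : 0 < r) :
    ∫ y : ℝ, (b ^ y) ^ p * exp (-(r * b ^ y)) = Gamma p / (r ^ p * |log b|) := by
  rw [integral_comp_const_rpow hb₀ hb₁ fun u => u ^ p * exp (-(r * u)),
    setIntegral_congr_fun measurableSet_Ioi (inv_smul_rpow_mul_eqOn_Ioi p _),
    integral_rpow_mul_exp_neg_mul_Ioi hp hr, one_div, inv_rpow hr.le, smul_eq_mul]
  field_simp

end GammaIntegral

theorem rpow_mul_rpow_neg_rpow_le {a b c p y : ℝ} (ha : 0 ≤ a) (hb : 0 ≤ b) (hc : 0 < c)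
    (hab : a ≤ b ^ p) (hy : 0 ≤ y) :
    a ^ y * c ^ (-(b ^ y)) ≤ (b ^ y) ^ p * exp (-(log c * b ^ y)) := by
  have hay : a ^ y ≤ (b ^ y) ^ p := calc
    a ^ y ≤ (b ^ p) ^ y := rpow_le_rpow ha hab hy
    _ = (b ^ y) ^ p := by rw [← rpow_mul hb, mul_comm, rpow_mul hb]
  rw [rpow_def_of_pos hc, mul_neg]
  gcongr

theorem integral_exp_double_exp_bound_general {a b c p : ℝ} (ha : 0 ≤ a) (hb₀ : 0 < b)
    (hb₁ : b ≠ 1) (hc : 1 < c) (hp : 0 < p) (hab : a ≤ b ^ p) :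
    IntegrableOn (fun y : ℝ => a ^ y * c ^ (-(b ^ y))) (Set.Ioi 0)
    ∧ (∫ y in Set.Ioi (0 : ℝ), a ^ y * c ^ (-(b ^ y))) ≤ Gamma p / (log c ^ p * |log b|) := by
  have hc₀ : 0 < c := one_pos.trans hc
  have hle : ∀ y ∈ Set.Ioi (0 : ℝ),
      a ^ y * c ^ (-(b ^ y)) ≤ (b ^ y) ^ p * exp (-(log c * b ^ y)) :=
    fun y hy => rpow_mul_rpow_neg_rpow_le ha hb₀.le hc₀ hab (le_of_lt hy)
  have hmajorant := integrable_const_rpow_rpow_mul_exp_neg_mul hb₀ hb₁ hp (log_pos hc)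
  have hint : IntegrableOn (fun y : ℝ => a ^ y * c ^ (-(b ^ y))) (Set.Ioi 0) := by
    refine hmajorant.integrableOn.mono' (Measurable.aestronglyMeasurable (by fun_prop)) ?_
    filter_upwards [ae_restrict_mem measurableSet_Ioi] with y hy
    rw [norm_of_nonneg (by positivity)]
    exact hle y hy
  refine ⟨hint, ?_⟩
  calc ∫ y in Set.Ioi (0 : ℝ), a ^ y * c ^ (-(b ^ y))
    _ ≤ ∫ y in Set.Ioi (0 : ℝ), (b ^ y) ^ p * exp (-(log c * b ^ y)) :=
      setIntegral_mono_on hint hmajorant.integrableOn measurableSet_Ioi hle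
    _ ≤ ∫ y : ℝ, (b ^ y) ^ p * exp (-(log c * b ^ y)) :=
      setIntegral_le_integral hmajorant (.of_forall fun y => by positivity)
    _ = Gamma p / (log c ^ p * |log b|) :=
      integral_const_rpow_rpow_mul_exp_neg_mul hb₀ hb₁ hp (log_pos hc)

theorem le_rpow_ceil_logb_add_one {a b : ℝ} (ha : 0 < a) (hb : 1 < b) :
    a ≤ b ^ (⌈logb b a⌉₊ + 1 : ℝ) :=
  (logb_le_iff_le_rpow hb ha).1 ((Nat.le_ceil _).trans (lt_add_one _).le)

/-- For all real `a, b, c > 1`, the integral `∫₀^∞ a^y c^{−b^y} dy` is finite and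
bounded by `k!/((log c)^{k+1} log b)` with `k = ⌈log a / log b⌉`. -/
theorem integral_exp_double_exp_bound (a b c : ℝ) (ha : 1 < a) (hb : 1 < b) (hc : 1 < c) :
    IntegrableOn (fun y : ℝ => a ^ y * c ^ (-(b ^ y))) (Set.Ioi 0)
    ∧ (∫ y in Set.Ioi (0 : ℝ), a ^ y * c ^ (-(b ^ y)))
        ≤ (Nat.ceil (Real.log a / Real.log b)).factorial
          / (Real.log c ^ (Nat.ceil (Real.log a / Real.log b) + 1) * Real.log b) := by
  simpa only [log_div_log, Gamma_nat_eq_factorial, abs_of_pos (log_pos hb), pow_succ,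
    rpow_add_one (log_pos hc).ne', rpow_natCast] using integral_exp_double_exp_bound_general
      (by positivity) (by positivity) hb.ne' hc (by positivity)
      (le_rpow_ceil_logb_add_one (by positivity) hb)
end

section
/- Let δ, ε, η ∈ (0,1) and c₀ ∈ ℝ satisfy (1 + η)|c₀| ≤ 1 and (1 + η^{−1})√ε ≤ 1, and let N ∈ ℕ with N ≥ 2 and √ε ≤ 1/(N − 1). Suppose (b_n)_{n≥0} is a sequence of nonnegative real numbers with b₀ = |c₀| and b_n ≤ b_{n−1}² + ε for all 1 ≤ n ≤ N. Then for every n with 1 ≤ n ≤ N one has b_n ≤ |c₀|^{2^{n−1}+1} + n ε, and in particular b_n ≤ |c₀|^{2^{n−1}} + n ε. -/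
/-!
By Young's inequality, `(x + e) ^ 2 ≤ (1 + η) x² + (1 + η⁻¹) e²`. If `x = c ^ (k + 1)` with
`(1 + η) c ≤ 1`, the factor `1 + η` is absorbed at the price of one power of `c`; if
`(1 + η⁻¹) e ≤ 1`, the squared error is at most `e` again. Hence one step turns the bound
`c ^ (k + 1) + e` into `c ^ (2 k + 1) + e + ε`: the error grows only additively, by `ε`.
-/

section OrderedField

variable {K : Type*} [Field K] [LinearOrder K] [IsStrictOrderedRing K]

lemma add_sq_le_one_add_mul_sq_add_one_add_inv_mul_sq {η : K} (hη : 0 < η) (x y : K) :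
    (x + y) ^ 2 ≤ (1 + η) * x ^ 2 + (1 + η⁻¹) * y ^ 2 := by
  linarith [add_sq x y, two_mul_le_add_mul_sq (a := x) (b := y) hη]

lemma pow_succ_add_sq_le_pow_two_mul_succ_add {η c e : K} (hη : 0 < η) (hc : 0 ≤ c) (he : 0 ≤ e)
    (hηc : (1 + η) * c ≤ 1) (hηe : (1 + η⁻¹) * e ≤ 1) (k : ℕ) :
    (c ^ (k + 1) + e) ^ 2 ≤ c ^ (2 * k + 1) + e :=
  calc (c ^ (k + 1) + e) ^ 2
      ≤ (1 + η) * (c ^ (k + 1)) ^ 2 + (1 + η⁻¹) * e ^ 2 :=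
        add_sq_le_one_add_mul_sq_add_one_add_inv_mul_sq hη _ _
    _ = (1 + η) * c * c ^ (2 * k + 1) + (1 + η⁻¹) * e * e := by ring
    _ ≤ c ^ (2 * k + 1) + e :=
        add_le_add (mul_le_of_le_one_left (by positivity) hηc) (mul_le_of_le_one_left he hηe)

lemma le_pow_two_pow_add_one_add_nat_mul {η ε c : K} (hη : 0 < η) (hε : 0 ≤ ε) (hc : 0 ≤ c)
    (hηc : (1 + η) * c ≤ 1) {b : ℕ → K} (hb0 : b 0 ≤ c) {n : ℕ}
    (hηε : (1 + η⁻¹) * (n * ε) ≤ 1) (hb_nonneg : ∀ m ≤ n, 0 ≤ b m)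
    (hb : ∀ m ≤ n, b (m + 1) ≤ b m ^ 2 + ε) :
    b (n + 1) ≤ c ^ (2 ^ n + 1) + (n + 1 : ℕ) * ε := by
  induction n with
  | zero =>
    have hb0_sq : b 0 ^ 2 ≤ c ^ 2 := pow_le_pow_left₀ (hb_nonneg 0 le_rfl) hb0 2
    simpa using (hb 0 le_rfl).trans (add_le_add_left hb0_sq ε)
  | succ n ih =>
    have herror : (1 + η⁻¹) * (n * ε) ≤ (1 + η⁻¹) * ((n + 1 : ℕ) * ε) := by
      gcongr
      exact n.le_succ
    have hprev : b (n + 1) ≤ c ^ (2 ^ n + 1) + (n + 1 : ℕ) * ε :=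
      ih (herror.trans hηε) (fun m hm ↦ hb_nonneg m (by lia)) (fun m hm ↦ hb m (by lia))
    calc b (n + 1 + 1)
        ≤ b (n + 1) ^ 2 + ε := hb (n + 1) le_rfl
      _ ≤ (c ^ (2 ^ n + 1) + (n + 1 : ℕ) * ε) ^ 2 + ε := by
          gcongr
          exact hb_nonneg (n + 1) le_rfl
      _ ≤ c ^ (2 * 2 ^ n + 1) + (n + 1 : ℕ) * ε + ε := by
          gcongr
          exact pow_succ_add_sq_le_pow_two_mul_succ_add hη hc (by positivity) hηc hηε _
      _ = c ^ (2 ^ (n + 1) + 1) + (n + 1 + 1 : ℕ) * ε := by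
          push_cast
          ring

theorem perturbed_sqrt_iteration_bound_general {η ε c : K} (hη : 0 < η) (hε : 0 ≤ ε) (hc : 0 ≤ c)
    (hηc : (1 + η) * c ≤ 1) {N : ℕ} (hηε : (1 + η⁻¹) * (((N : K) - 1) * ε) ≤ 1) {b : ℕ → K}
    (hb_nonneg : ∀ n < N, 0 ≤ b n) (hb0 : b 0 ≤ c)
    (hb : ∀ n, 1 ≤ n → n ≤ N → b n ≤ b (n - 1) ^ 2 + ε) :
    ∀ n, 1 ≤ n → n ≤ N →
      b n ≤ c ^ (2 ^ (n - 1) + 1) + (n : K) * ε ∧ b n ≤ c ^ (2 ^ (n - 1)) + (n : K) * ε := by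
  intro n hn hnN
  obtain ⟨k, rfl⟩ := Nat.exists_eq_add_of_le' hn
  have hkN : (k : K) ≤ (N : K) - 1 := le_sub_iff_add_le.mpr (mod_cast hnN)
  have herror : (1 + η⁻¹) * (k * ε) ≤ (1 + η⁻¹) * (((N : K) - 1) * ε) := by gcongr
  have hbound : b (k + 1) ≤ c ^ (2 ^ k + 1) + (k + 1 : ℕ) * ε :=
    le_pow_two_pow_add_one_add_nat_mul hη hε hc hηc hb0 (herror.trans hηε)
      (fun m hm ↦ hb_nonneg m (by lia)) (fun m hm ↦ hb (m + 1) (by lia) (by lia))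
  have hc_le_one : c ≤ 1 := (le_mul_of_one_le_left hc (by linarith)).trans hηc
  have hpow : c ^ (2 ^ k + 1) ≤ c ^ 2 ^ k := pow_le_pow_of_le_one hc hc_le_one (Nat.le_succ _)
  exact ⟨hbound, hbound.trans (add_le_add_left hpow _)⟩

end OrderedField

lemma mul_mul_le_one_of_mul_sqrt_le_one {x y ε : ℝ} (hε : 0 ≤ ε) (hy : 0 ≤ y)
    (hxε : x * √ε ≤ 1) (hyε : y * √ε ≤ 1) : x * (y * ε) ≤ 1 :=
  calc x * (y * ε) = x * √ε * (y * √ε) := by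
        rw [mul_mul_mul_comm, Real.mul_self_sqrt hε, mul_assoc]
    _ ≤ 1 := mul_le_one₀ hxε (by positivity) hyε

/-- Stability of the perturbed square-root iteration: if `(1 + η)|c₀| ≤ 1`,
`(1 + η⁻¹)√ε ≤ 1`, `N ≥ 2`, `√ε ≤ 1/(N − 1)`, and `b₀ = |c₀|`,
`b_n ≤ b_{n−1}² + ε` for `1 ≤ n ≤ N`, then for all `1 ≤ n ≤ N`
`b_n ≤ |c₀|^{2^{n−1}+1} + n ε`, and in particular `b_n ≤ |c₀|^{2^{n−1}} + n ε`. -/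
theorem perturbed_sqrt_iteration_bound (δ ε η : ℝ)
    (hδ : δ ∈ Set.Ioo (0 : ℝ) 1) (hε : ε ∈ Set.Ioo (0 : ℝ) 1) (hη : η ∈ Set.Ioo (0 : ℝ) 1)
    (c₀ : ℝ) (hc₀ : (1 + η) * |c₀| ≤ 1)
    (hεη : (1 + η⁻¹) * Real.sqrt ε ≤ 1)
    (N : ℕ) (hN : 2 ≤ N) (hεN : Real.sqrt ε ≤ 1 / ((N : ℝ) - 1))
    (b : ℕ → ℝ) (hb_nonneg : ∀ n, 0 ≤ b n) (hb0 : b 0 = |c₀|)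
    (hb : ∀ n, 1 ≤ n → n ≤ N → b n ≤ (b (n - 1)) ^ 2 + ε) :
    ∀ n, 1 ≤ n → n ≤ N →
      b n ≤ |c₀| ^ (2 ^ (n - 1) + 1) + (n : ℝ) * ε
      ∧ b n ≤ |c₀| ^ (2 ^ (n - 1)) + (n : ℝ) * ε := by
  have hN_sub : 0 ≤ (N : ℝ) - 1 := sub_nonneg.mpr (mod_cast one_le_two.trans hN)
  have hNε : ((N : ℝ) - 1) * √ε ≤ 1 :=
    (mul_comm _ _).trans_le (mul_le_of_le_div₀ zero_le_one hN_sub hεN)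
  exact perturbed_sqrt_iteration_bound_general hη.1 hε.1.le (abs_nonneg c₀) hc₀
    (mul_mul_le_one_of_mul_sqrt_le_one hε.1.le hN_sub hεη hNε) (fun n _ ↦ hb_nonneg n) hb0.le hb
end
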